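/- Let a > 0 and let f : ℝ → ℝ be a Schwartz function. Then for every x ∈ ℝ, −(a/π)·∫_{−∞}^{∞} T_a(x − t)·f(t) dt = f(x) + (1/π)·∫_{−∞}^{∞} S_a(x − t)·f'(t) dt, where both convolution integrals converge absolutely. -/

import Mathlib

open Filter MeasureTheory Topology

/-- The sine integral `si(x) = -∫_x^∞ sin t / t dt`, defined via the improper
(limit of interval integrals) form. -/
noncomputable def si (x : ℝ) : ℝ :=
  - limUnder Filter.atTop (fun R : ℝ => ∫ t in x..R, Real.sin t / t)

/-- The cosine integral `ci(x) = -∫_x^∞ cos t / t dt`, defined via the improper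
(limit of interval integrals) form. -/
noncomputable def ci (x : ℝ) : ℝ :=
  - limUnder Filter.atTop (fun R : ℝ => ∫ t in x..R, Real.cos t / t)

/-- The kernel `S_a(x) = sign(x) (si(a|x|) cos(a|x|) - ci(a|x|) sin(a|x|))`, with `S_a(0)=0`. -/
noncomputable def Sker (a x : ℝ) : ℝ :=
  Real.sign x * (si (a * |x|) * Real.cos (a * |x|) - ci (a * |x|) * Real.sin (a * |x|))

/-- The kernel `T_a(x) = si(a|x|) sin(a|x|) + ci(a|x|) cos(a|x|)`. -/
noncomputable def Tker (a x : ℝ) : ℝ :=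
  si (a * |x|) * Real.sin (a * |x|) + ci (a * |x|) * Real.cos (a * |x|)

section

open Set

/-- The Laplace transform `∫_0^∞ e^{-us} φ(s) ds` on the half line. -/
noncomputable def halfLaplace (φ : ℝ → ℝ) (u : ℝ) : ℝ :=
  ∫ s in Ioi (0 : ℝ), Real.exp (-u * s) * φ s

theorem integrableOn_exp_mul_of_bounded {φ : ℝ → ℝ} (hφ : Continuous φ)
    (hb : ∀ s, |φ s| ≤ 1) {u : ℝ} (hu : 0 < u) :
    IntegrableOn (fun s => Real.exp (-u * s) * φ s) (Ioi 0) := by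
  refine (integrableOn_exp_mul_Ioi (neg_lt_zero.2 hu) 0).mono' (by fun_prop) ?_
  refine Eventually.of_forall fun s => ?_
  rw [norm_mul, Real.norm_eq_abs, Real.abs_exp]
  exact mul_le_of_le_one_right (Real.exp_pos _).le (hb s)

theorem integral_Ioi_exp_neg_mul {u : ℝ} (hu : 0 < u) :
    ∫ s in Ioi (0 : ℝ), Real.exp (-u * s) = 1 / u := by
  rw [integral_exp_mul_Ioi (neg_lt_zero.2 hu)]
  simp [neg_div_neg_eq]

theorem abs_halfLaplace_le {φ : ℝ → ℝ} (hb : ∀ s, |φ s| ≤ 1) {u : ℝ} (hu : 0 < u) :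
    |halfLaplace φ u| ≤ 1 / u := by
  rw [← integral_Ioi_exp_neg_mul hu]
  refine norm_integral_le_of_norm_le (f := fun s => Real.exp (-u * s) * φ s)
    (integrableOn_exp_mul_Ioi (neg_lt_zero.2 hu) 0)
    (Eventually.of_forall fun s => ?_)
  rw [norm_mul, Real.norm_eq_abs, Real.abs_exp]
  exact mul_le_of_le_one_right (Real.exp_pos _).le (hb s)

theorem tendsto_halfLaplace_atTop {φ : ℝ → ℝ} (hb : ∀ s, |φ s| ≤ 1) :
    Tendsto (halfLaplace φ) atTop (𝓝 0) := by
  refine squeeze_zero_norm' ?_ (tendsto_const_nhds.div_atTop tendsto_id : Tendsto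
    (fun u : ℝ => 1 / u) atTop (𝓝 0))
  filter_upwards [eventually_gt_atTop 0] with u hu
  exact abs_halfLaplace_le hb hu

theorem hasDerivAt_halfLaplace {φ : ℝ → ℝ} (hφ : Continuous φ) (hb : ∀ s, |φ s| ≤ 1)
    {u : ℝ} (hu : 0 < u) :
    HasDerivAt (halfLaplace φ) (-halfLaplace (fun s => s * φ s) u) u := by
  have key := (hasDerivAt_integral_of_dominated_loc_of_deriv_le
    (μ := volume.restrict (Ioi (0 : ℝ))) (x₀ := u) (s := Ioi (u / 2))
    (F := fun v s => Real.exp (-v * s) * φ s)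
    (F' := fun v s => -(Real.exp (-v * s) * (s * φ s)))
    (bound := fun s => s ^ (1 : ℝ) * Real.exp (-(u / 2) * s ^ (1 : ℝ)))
    (Ioi_mem_nhds (by linarith)) (Eventually.of_forall fun v => by fun_prop)
    (integrableOn_exp_mul_of_bounded hφ hb hu) (by fun_prop) ?_
    (integrableOn_rpow_mul_exp_neg_mul_rpow (by norm_num) one_pos (by linarith)) ?_).2
  · rw [integral_neg] at key
    exact key
  · refine (ae_restrict_iff' measurableSet_Ioi).2 (Eventually.of_forall fun s hs v hv => ?_)
    rw [mem_Ioi] at hs hv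
    rw [norm_neg, norm_mul, norm_mul, Real.norm_eq_abs, Real.abs_exp, Real.norm_eq_abs,
      abs_of_pos hs, Real.rpow_one, mul_comm s (Real.exp _)]
    have h1 : Real.exp (-v * s) ≤ Real.exp (-(u / 2) * s) :=
      Real.exp_le_exp.2 (by nlinarith)
    have h2 : s * ‖φ s‖ ≤ s := mul_le_of_le_one_right hs.le (hb s)
    exact mul_le_mul h1 h2 (by positivity) (by positivity)
  · refine Eventually.of_forall fun s v _ => ?_
    have := (((hasDerivAt_id v).neg.mul_const s).exp).mul_const (φ s)
    refine this.congr_deriv ?_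
    simp only [Pi.neg_apply, id]
    ring

/-- The Laplace transform of `1 / (1 + s²)`. -/
noncomputable def laplaceP : ℝ → ℝ := halfLaplace fun s => (1 + s ^ 2)⁻¹

/-- The Laplace transform of `s / (1 + s²)`. -/
noncomputable def laplaceQ : ℝ → ℝ := halfLaplace fun s => s * (1 + s ^ 2)⁻¹

theorem continuous_inv_one_add_sq : Continuous fun s : ℝ => (1 + s ^ 2)⁻¹ :=
  Continuous.inv₀ (by fun_prop) fun s => by positivity

theorem abs_inv_one_add_sq_le (s : ℝ) : |(1 + s ^ 2)⁻¹| ≤ 1 := by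
  rw [abs_of_nonneg (by positivity)]
  exact inv_le_one_of_one_le₀ (by nlinarith [sq_nonneg s])

theorem abs_mul_inv_one_add_sq_le (s : ℝ) : |s * (1 + s ^ 2)⁻¹| ≤ 1 := by
  rw [abs_mul, abs_of_nonneg (show 0 ≤ (1 + s ^ 2)⁻¹ by positivity), ← div_eq_mul_inv,
    div_le_one (by positivity), abs_le]
  constructor <;> nlinarith [sq_nonneg (s + 1), sq_nonneg (s - 1)]

theorem hasDerivAt_laplaceP {u : ℝ} (hu : 0 < u) : HasDerivAt laplaceP (-laplaceQ u) u :=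
  hasDerivAt_halfLaplace continuous_inv_one_add_sq abs_inv_one_add_sq_le hu

theorem hasDerivAt_laplaceQ {u : ℝ} (hu : 0 < u) :
    HasDerivAt laplaceQ (laplaceP u - 1 / u) u := by
  have h := hasDerivAt_halfLaplace (continuous_id.mul continuous_inv_one_add_sq)
    abs_mul_inv_one_add_sq_le hu
  refine h.congr_deriv ?_
  have hP : laplaceP u = ∫ s in Ioi (0 : ℝ), Real.exp (-u * s) * (1 + s ^ 2)⁻¹ := rfl
  rw [hP, ← integral_Ioi_exp_neg_mul hu, ← integral_sub
    (integrableOn_exp_mul_of_bounded continuous_inv_one_add_sq abs_inv_one_add_sq_le hu)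
    (integrableOn_exp_mul_Ioi (neg_lt_zero.2 hu) 0), halfLaplace, ← integral_neg]
  congr 1
  ext s
  have : 1 + s ^ 2 ≠ 0 := by positivity
  simp only [Pi.mul_apply, id]
  field_simp
  ring

theorem norm_exp_mul_inv_one_add_sq_le {u s : ℝ} (hu : 0 ≤ u) (hs : 0 < s) :
    ‖Real.exp (-u * s) * (1 + s ^ 2)⁻¹‖ ≤ (1 + s ^ 2)⁻¹ := by
  rw [Real.norm_of_nonneg (by positivity)]
  refine mul_le_of_le_one_left (by positivity) (Real.exp_le_one_iff.2 ?_)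
  nlinarith

theorem laplaceP_zero : laplaceP 0 = Real.pi / 2 := by
  simp [laplaceP, halfLaplace, integral_Ioi_inv_one_add_sq]

theorem norm_laplaceP_le {u : ℝ} (hu : 0 ≤ u) : ‖laplaceP u‖ ≤ Real.pi / 2 := by
  rw [← sub_zero (Real.pi / 2), ← Real.arctan_zero, ← integral_Ioi_inv_one_add_sq]
  refine norm_integral_le_of_norm_le integrable_inv_one_add_sq.integrableOn ?_
  exact (ae_restrict_iff' measurableSet_Ioi).2
    (Eventually.of_forall fun s hs => norm_exp_mul_inv_one_add_sq_le hu hs)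

theorem continuousOn_laplaceP : ContinuousOn laplaceP (Ici 0) := by
  intro u _
  refine continuousWithinAt_of_dominated (bound := fun s => (1 + s ^ 2)⁻¹)
    (Eventually.of_forall fun v => ?_) ?_ integrable_inv_one_add_sq.integrableOn ?_
  · have := continuous_inv_one_add_sq
    fun_prop
  · filter_upwards [self_mem_nhdsWithin] with v hv
    exact (ae_restrict_iff' measurableSet_Ioi).2
      (Eventually.of_forall fun s hs => norm_exp_mul_inv_one_add_sq_le hv hs)
  · exact Eventually.of_forall fun s => by fun_prop

theorem tendsto_laplaceP_atTop : Tendsto laplaceP atTop (𝓝 0) :=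
  tendsto_halfLaplace_atTop abs_inv_one_add_sq_le

theorem tendsto_laplaceQ_atTop : Tendsto laplaceQ atTop (𝓝 0) :=
  tendsto_halfLaplace_atTop abs_mul_inv_one_add_sq_le

theorem integrableOn_laplaceQ : IntegrableOn laplaceQ (Ioi 0) := by
  refine (integrableOn_Ioi_deriv_of_nonpos (continuousOn_laplaceP 0 self_mem_Ici)
    (fun u hu => hasDerivAt_laplaceP hu) (fun u _ => ?_) tendsto_laplaceP_atTop).neg.congr_fun
    (fun u _ => by simp) measurableSet_Ioi
  refine neg_nonpos.2 (setIntegral_nonneg measurableSet_Ioi fun s hs => ?_)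
  have : 0 < s := hs
  positivity

theorem tendsto_mul_of_abs_le_one {g c : ℝ → ℝ} (hg : Tendsto g atTop (𝓝 0))
    (hc : ∀ x, |c x| ≤ 1) : Tendsto (fun x => g x * c x) atTop (𝓝 0) := by
  refine squeeze_zero_norm (a := fun x => ‖g x‖) (fun x => ?_) (by simpa using hg.norm)
  rw [norm_mul]
  exact mul_le_of_le_one_right (norm_nonneg _) (hc x)

theorem limUnder_intervalIntegral {F F' : ℝ → ℝ} {x : ℝ} (hx : 0 < x)
    (hF : ∀ u, 0 < u → HasDerivAt F (F' u) u) (hF' : ContinuousOn F' (Ioi 0))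
    (hlim : Tendsto F atTop (𝓝 0)) :
    limUnder atTop (fun R : ℝ => ∫ t in x..R, F' t) = -F x := by
  refine Tendsto.limUnder_eq ?_
  have h : Tendsto (fun R => F R - F x) atTop (𝓝 (0 - F x)) := hlim.sub_const _
  rw [zero_sub] at h
  refine h.congr' ?_
  filter_upwards [eventually_ge_atTop x] with R hR
  have hsub : uIcc x R ⊆ Ioi 0 := by
    rw [uIcc_of_le hR]
    exact fun t ht => hx.trans_le ht.1
  exact (intervalIntegral.integral_eq_sub_of_hasDerivAt (fun t ht => hF t (hsub ht))
    (hF'.mono hsub).intervalIntegrable).symm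

theorem si_eq {x : ℝ} (hx : 0 < x) :
    si x = -(laplaceP x * Real.cos x + laplaceQ x * Real.sin x) := by
  rw [si, limUnder_intervalIntegral (F := fun u =>
    -(laplaceP u * Real.cos u + laplaceQ u * Real.sin u)) hx]
  · simp
  · intro u hu
    refine (((hasDerivAt_laplaceP hu).mul (Real.hasDerivAt_cos u)).add
      ((hasDerivAt_laplaceQ hu).mul (Real.hasDerivAt_sin u))).neg.congr_deriv ?_
    ring
  · exact Real.continuous_sin.continuousOn.div continuousOn_id fun u hu => ne_of_gt hu
  · simpa using ((tendsto_mul_of_abs_le_one tendsto_laplaceP_atTop Real.abs_cos_le_one).add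
      (tendsto_mul_of_abs_le_one tendsto_laplaceQ_atTop Real.abs_sin_le_one)).neg

theorem ci_eq {x : ℝ} (hx : 0 < x) :
    ci x = laplaceP x * Real.sin x - laplaceQ x * Real.cos x := by
  rw [ci, limUnder_intervalIntegral (F := fun u =>
    laplaceP u * Real.sin u - laplaceQ u * Real.cos u) hx]
  · simp
  · intro u hu
    refine (((hasDerivAt_laplaceP hu).mul (Real.hasDerivAt_sin u)).sub
      ((hasDerivAt_laplaceQ hu).mul (Real.hasDerivAt_cos u))).congr_deriv ?_
    ring
  · exact Real.continuous_cos.continuousOn.div continuousOn_id fun u hu => ne_of_gt hu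
  · simpa using (tendsto_mul_of_abs_le_one tendsto_laplaceP_atTop Real.abs_sin_le_one).sub
      (tendsto_mul_of_abs_le_one tendsto_laplaceQ_atTop Real.abs_cos_le_one)

theorem Tker_of_pos {a y : ℝ} (ha : 0 < a) (hy : 0 < y) : Tker a y = -laplaceQ (a * y) := by
  have h : 0 < a * y := mul_pos ha hy
  rw [Tker, abs_of_pos hy, si_eq h, ci_eq h]
  linear_combination (-laplaceQ (a * y)) * Real.sin_sq_add_cos_sq (a * y)

theorem Sker_of_pos {a y : ℝ} (ha : 0 < a) (hy : 0 < y) : Sker a y = -laplaceP (a * y) := by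
  have h : 0 < a * y := mul_pos ha hy
  rw [Sker, abs_of_pos hy, Real.sign_of_pos hy, si_eq h, ci_eq h]
  linear_combination (-laplaceP (a * y)) * Real.sin_sq_add_cos_sq (a * y)

theorem Tker_neg (a y : ℝ) : Tker a (-y) = Tker a y := by
  simp [Tker]

theorem Sker_neg (a y : ℝ) : Sker a (-y) = -Sker a y := by
  simp [Sker, Real.sign_neg]

theorem integrable_and_integral_eq_Ioi {h : ℝ → ℝ} (h1 : IntegrableOn h (Ioi 0))
    (h2 : IntegrableOn (fun y => h (-y)) (Ioi 0)) :
    Integrable h ∧ ∫ y, h y = ∫ y in Ioi (0 : ℝ), (h y + h (-y)) := by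
  have h3 : IntegrableOn h (Iic 0) := by
    rw [integrableOn_Iic_iff_integrableOn_Iio]
    rw [← neg_zero] at h2
    simpa using h2.comp_neg_Iio
  refine ⟨?_, ?_⟩
  · rw [← integrableOn_univ, ← Iic_union_Ioi (a := (0 : ℝ))]
    exact h3.union h1
  · rw [← intervalIntegral.integral_Iic_add_Ioi h3 h1, integral_add h1 h2, integral_comp_neg_Ioi,
      neg_zero, add_comm]

theorem integrableOn_laplaceQ_mul {a : ℝ} (ha : 0 < a) {g : ℝ → ℝ} (hg : Continuous g) {C : ℝ}
    (hC : ∀ y, ‖g y‖ ≤ C) : IntegrableOn (fun y => laplaceQ (a * y) * g y) (Ioi 0) := by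
  have hq : IntegrableOn (fun y => laplaceQ (a * y)) (Ioi 0) := by
    rw [integrableOn_Ioi_comp_mul_left_iff _ _ ha, mul_zero]
    exact integrableOn_laplaceQ
  exact hq.mul_bdd (c := C) hg.aestronglyMeasurable (Eventually.of_forall hC)

theorem continuousOn_laplaceP_mul {a : ℝ} (ha : 0 < a) :
    ContinuousOn (fun y => laplaceP (a * y)) (Ici 0) :=
  continuousOn_laplaceP.comp (by fun_prop) fun _ hy => mul_nonneg ha.le hy

theorem integrableOn_laplaceP_mul {a : ℝ} (ha : 0 < a) {g : ℝ → ℝ} (hg : Integrable g) :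
    IntegrableOn (fun y => laplaceP (a * y) * g y) (Ioi 0) := by
  refine hg.integrableOn.bdd_mul (c := Real.pi / 2) ?_ ?_
  · exact ((continuousOn_laplaceP_mul ha).mono Ioi_subset_Ici_self).aestronglyMeasurable
      measurableSet_Ioi
  · exact (ae_restrict_iff' measurableSet_Ioi).2
      (Eventually.of_forall fun y hy => norm_laplaceP_le (mul_nonneg ha.le (le_of_lt hy)))

/-- Integration by parts on the half line for the symmetrized function. -/
theorem integral_laplace_by_parts {a : ℝ} (ha : 0 < a) (f : SchwartzMap ℝ ℝ) (x : ℝ)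
    (hint : IntegrableOn (fun y => -a * laplaceQ (a * y) * (f (x - y) + f (x + y))
      + laplaceP (a * y) * (-deriv f (x - y) + deriv f (x + y))) (Ioi 0)) :
    ∫ y in Ioi (0 : ℝ), (-a * laplaceQ (a * y) * (f (x - y) + f (x + y))
      + laplaceP (a * y) * (-deriv f (x - y) + deriv f (x + y))) = -Real.pi * f x := by
  have hzero : Tendsto f atTop (𝓝 0) :=
    f.tendsto_cocompact.mono_left atTop_le_cocompact
  have hzero' : Tendsto f atBot (𝓝 0) :=
    f.tendsto_cocompact.mono_left atBot_le_cocompact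
  rw [integral_Ioi_of_hasDerivAt_of_tendsto
    (f := fun y => laplaceP (a * y) * (f (x - y) + f (x + y))) (m := 0) ?_ ?_ hint ?_]
  · simp [laplaceP_zero]
    ring
  · exact ((continuousOn_laplaceP_mul ha).mul (by fun_prop)) 0 self_mem_Ici
  · intro y hy
    have hp := (hasDerivAt_laplaceP (mul_pos ha hy)).comp y ((hasDerivAt_id y).const_mul a)
    have h1 := (f.hasDerivAt (x - y)).comp y ((hasDerivAt_id y).const_sub x)
    have h2 := (f.hasDerivAt (x + y)).comp y ((hasDerivAt_id y).const_add x)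
    refine (hp.mul (h1.add h2)).congr_deriv ?_
    simp only [Pi.add_apply, Function.comp_apply]
    ring
  · have hp := tendsto_laplaceP_atTop.comp (tendsto_id.const_mul_atTop ha)
    have h1 := hzero'.comp (tendsto_atBot_add_const_left _ x tendsto_neg_atTop_atBot)
    have h2 := hzero.comp (tendsto_atTop_add_const_left _ x tendsto_id)
    simpa [Function.comp_def, sub_eq_add_neg] using hp.mul (h1.add h2)

end

/-- for a Schwartz function `f`,
`-(a/π) ∫ T_a(x-t) f(t) dt = f(x) + (1/π) ∫ S_a(x-t) f'(t) dt`,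
with both convolution integrals converging absolutely. -/
theorem stmt17 (a : ℝ) (ha : 0 < a) (f : SchwartzMap ℝ ℝ) (x : ℝ) :
    Integrable (fun t : ℝ => Tker a (x - t) * f t) ∧
    Integrable (fun t : ℝ => Sker a (x - t) * deriv f t) ∧
    -(a / Real.pi) * ∫ t : ℝ, Tker a (x - t) * f t
      = f x + (1 / Real.pi) * ∫ t : ℝ, Sker a (x - t) * deriv f t := by
  have hf : Continuous f := f.continuous
  obtain ⟨C, hC⟩ : ∃ C, ∀ y, ‖f y‖ ≤ C := ⟨_, f.norm_le_seminorm ℝ⟩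
  have hd : Integrable (deriv f) := (SchwartzMap.derivCLM ℝ ℝ f).integrable
  have hsubst : ∀ k g : ℝ → ℝ, Integrable (fun y => k y * g (x - y)) →
      Integrable fun t => k (x - t) * g t := fun k g h => by
    simpa using h.comp_sub_left x
  have hsubst' : ∀ k g : ℝ → ℝ, ∫ t, k (x - t) * g t = ∫ y, k y * g (x - y) := fun k g => by
    simpa using (integral_sub_left_eq_self (fun y => k y * g (x - y)) volume x)
  have q1 := integrableOn_laplaceQ_mul ha (g := fun y => f (x - y)) (by fun_prop) fun y => hC _
  have q2 := integrableOn_laplaceQ_mul ha (g := fun y => f (x + y)) (by fun_prop) fun y => hC _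
  have p1 := integrableOn_laplaceP_mul ha (hd.comp_sub_left x)
  have p2 := integrableOn_laplaceP_mul ha (hd.comp_add_left x)
  have hT := integrable_and_integral_eq_Ioi (h := fun y => Tker a y * f (x - y))
    (q1.neg.congr_fun (fun y hy => by simp [Tker_of_pos ha hy]) measurableSet_Ioi)
    (q2.neg.congr_fun (fun y hy => by simp [Tker_neg, Tker_of_pos ha hy]) measurableSet_Ioi)
  have hS := integrable_and_integral_eq_Ioi (h := fun y => Sker a y * deriv f (x - y))
    (p1.neg.congr_fun (fun y hy => by simp [Sker_of_pos ha hy]) measurableSet_Ioi)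
    (p2.congr_fun (fun y hy => by simp [Sker_neg, Sker_of_pos ha hy]) measurableSet_Ioi)
  refine ⟨hsubst _ _ hT.1, hsubst _ _ hS.1, ?_⟩
  have hA : IntegrableOn (fun y => -a * laplaceQ (a * y) * (f (x - y) + f (x + y))) (Set.Ioi 0) :=
    IntegrableOn.congr_fun ((q1.add q2).const_mul (-a)) (fun y _ => by simp; ring)
      measurableSet_Ioi
  have hB : IntegrableOn (fun y => laplaceP (a * y) * (-deriv f (x - y) + deriv f (x + y)))
      (Set.Ioi 0) :=
    (p2.sub p1).congr_fun (fun y _ => by simp; ring) measurableSet_Ioi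
  have hparts := integral_laplace_by_parts ha f x (hA.add hB)
  rw [integral_add hA hB] at hparts
  have eT : a * ∫ t, Tker a (x - t) * f t
      = ∫ y in Set.Ioi (0 : ℝ), -a * laplaceQ (a * y) * (f (x - y) + f (x + y)) := by
    rw [hsubst', hT.2, ← integral_const_mul]
    refine setIntegral_congr_fun measurableSet_Ioi fun y hy => ?_
    simp only [Tker_neg, Tker_of_pos ha hy, sub_neg_eq_add]
    ring
  have eS : ∫ t, Sker a (x - t) * deriv f t
      = ∫ y in Set.Ioi (0 : ℝ), laplaceP (a * y) * (-deriv f (x - y) + deriv f (x + y)) := by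
    rw [hsubst', hS.2]
    refine setIntegral_congr_fun measurableSet_Ioi fun y hy => ?_
    simp only [Sker_neg, Sker_of_pos ha hy, sub_neg_eq_add]
    ring
  rw [← eT, ← eS] at hparts
  have := Real.pi_ne_zero
  field_simp
  linarith
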